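/- Let r ≥ 1 and let A₀, A₁, …, A_r, B₃, …, Bₙ be positive semidefinite complex Hermitian n × n matrices. Set d_{ij} = D(Aᵢ, Aⱼ, B₃, …, Bₙ) for 0 ≤ i, j ≤ r. Then det((d_{0i}d_{0j} − d_{00}d_{ij})_{1 ≤ i,j ≤ r}) ≥ 0 and (−1)^r det((d_{ij})_{0 ≤ i,j ≤ r}) ≥ 0. -/

import Mathlib

open scoped ComplexOrder

/-- The mixed discriminant of `n` complex `n × n` matrices. -/
noncomputable def mixedDisc {n : ℕ} (A : Fin n → Matrix (Fin n) (Fin n) ℂ) : ℂ :=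
  (n.factorial : ℂ)⁻¹ * ∑ σ : Equiv.Perm (Fin n), (Matrix.of fun i j => A (σ j) i j).det

/-!
The determinant `det Z = D(Z, …, Z)` does not vanish when the imaginary part `ℑ Z` is positive
definite. This nonvanishing survives fixing the last argument at a positive definite `B`: up to a
constant, `f(Z, …, Z, B)` is the derivative at `0` of `w ↦ f(Z + wB, …, Z + wB)`, whose roots lie in
the open lower half-plane, and so do the roots of its derivative by Gauss–Lucas. Iterating,
`D(Z, Z, B₃, …, Bₙ) ≠ 0` whenever `ℑ Z` is positive definite, and for Hermitian `X` the real
quadratic `z ↦ D(X + zA, X + zA, B₃, …, Bₙ)` has only real roots. Its discriminant is therefore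
nonnegative, which is the Alexandrov–Fenchel inequality `d(A, A) d(X, X) ≤ d(A, X)²`.

Since `X` need not be positive semidefinite, it may be any real combination of the `Aᵢ`, so the
matrix `(d₀ᵢd₀ⱼ - d₀₀dᵢⱼ)` is positive semidefinite. Chio's condensation expresses its determinant
as `(-1)ʳ d₀₀ʳ⁻¹ det (dᵢⱼ)`, and a perturbation of `A₀, B₃, …, Bₙ` makes `d₀₀` positive.
-/

open Matrix Polynomial ComplexStarModule Filter Topology

/-! ### Polynomials and determinants -/

theorem eval_derivative_ne_zero_of_forall_root_im_neg {p : ℂ[X]} (hp : 0 < p.degree)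
    (hroot : ∀ z, p.eval z = 0 → z.im < 0) {z : ℂ} (hz : 0 ≤ z.im) :
    (derivative p).eval z ≠ 0 := by
  intro hpz
  have hp' : derivative p ≠ 0 := fun h =>
    hp.not_ge (natDegree_eq_zero_iff_degree_le_zero.mp (derivative_eq_zero.mp h))
  have hmem : z ∈ (derivative p).rootSet ℂ := by
    rw [mem_rootSet]
    exact ⟨hp', by simpa using hpz⟩
  have hsub : convexHull ℝ (p.rootSet ℂ) ⊆ {w : ℂ | w.im < 0} :=
    convexHull_min (fun w hw => hroot w (by simpa using (mem_rootSet.mp hw).2))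
      (convex_halfSpace_im_lt 0)
  exact hz.not_gt (hsub (rootSet_derivative_subset_convexHull_rootSet hp hmem))

theorem mul_le_sq_of_forall_im_pos_ne_zero {a b c : ℝ}
    (h : ∀ z : ℂ, 0 < z.im → (c : ℂ) + 2 * z * b + z ^ 2 * a ≠ 0) : a * c ≤ b ^ 2 := by
  by_contra! hlt
  have ha : a ≠ 0 := by
    rintro rfl
    nlinarith [sq_nonneg b]
  have hdisc : 0 < a * c - b ^ 2 := sub_pos.mpr hlt
  set s := √(a * c - b ^ 2)
  have hs : (s : ℂ) ^ 2 = a * c - b ^ 2 := by exact_mod_cast Real.sq_sqrt hdisc.le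
  have ha' : ((|a| : ℝ) : ℂ) ^ 2 = a ^ 2 := by exact_mod_cast sq_abs a
  have haC : (a : ℂ) ≠ 0 := by exact_mod_cast ha
  refine h (((-b / a : ℝ) : ℂ) + ((s / |a| : ℝ) : ℂ) * Complex.I) ?_ ?_
  · rw [Complex.add_im, Complex.ofReal_im, Complex.im_ofReal_mul, Complex.I_im, zero_add, mul_one]
    exact div_pos (Real.sqrt_pos.mpr hdisc) (abs_pos.mpr ha)
  · have hsq : (((s / |a| : ℝ) : ℂ) * Complex.I) ^ 2 = -((a * c - b ^ 2) / a ^ 2) := by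
      push_cast
      rw [mul_pow, div_pow, Complex.I_sq, hs, ha', mul_neg_one]
    have hb : ((-b / a : ℝ) : ℂ) = -b / a := by push_cast; rfl
    generalize ((s / |a| : ℝ) : ℂ) * Complex.I = t at hsq ⊢
    rw [hb, add_sq, hsq]
    field_simp
    ring

theorem neg_pow_mul_det_eq_mul_det_condensation {R : Type*} [CommRing R] {r : ℕ}
    (d : Matrix (Fin (r + 1)) (Fin (r + 1)) R) :
    (-d 0 0) ^ r * d.det =
      d 0 0 * (of fun i j : Fin r => d i.succ 0 * d 0 j.succ - d 0 0 * d i.succ j.succ).det := by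
  let c : Fin (r + 1) → R := Fin.cons 1 fun _ => -d 0 0
  let b : Fin (r + 1) → R := Fin.cons 0 fun i => d i.succ 0
  let e : Matrix (Fin (r + 1)) (Fin (r + 1)) R := of fun i j => b i * d 0 j + c i * d i j
  have hscale : (of fun i j => c i * d i j).det = (-d 0 0) ^ r * d.det := by
    rw [det_mul_column, Fin.prod_univ_succ]
    simp [c]
  have hreduce : e.det = (of fun i j => c i * d i j).det :=
    det_eq_of_forall_row_eq_smul_add_const b 0 rfl fun i j => by simp [e, b, c, add_comm]
  have hcol (i : Fin r) : e i.succ 0 = 0 := by simp [e, b, c, mul_comm]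
  rw [← hscale, ← hreduce, det_succ_column_zero, Fin.sum_univ_succ,
    Finset.sum_eq_zero fun i _ => by rw [hcol, mul_zero, zero_mul]]
  simp [e, b, c, submatrix, ← sub_eq_add_neg]

/-! ### Reverse Cauchy–Schwarz inequalities -/

section ReverseCauchySchwarz

variable {E : Type*} [AddCommGroup E] [Module ℝ E] {β : LinearMap.BilinForm ℝ E}
  {S : Submodule ℝ E} {a : E}

theorem posSemidef_of_reverse_cauchySchwarz (hβ : β.IsSymm)
    (h : ∀ x ∈ S, β a a * β x x ≤ β a x ^ 2) {ι : Type*} [Finite ι] {v : ι → E}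
    (hv : ∀ i, v i ∈ S) :
    (of fun i j => β a (v i) * β a (v j) - β a a * β (v i) (v j)).PosSemidef := by
  cases nonempty_fintype ι
  refine PosSemidef.of_dotProduct_mulVec_nonneg ?_ fun c => ?_
  · ext i j
    simp [hβ.eq (v i) (v j), mul_comm (β a (v i))]
  · have hquad : star c ⬝ᵥ (of fun i j => β a (v i) * β a (v j) - β a a * β (v i) (v j)) *ᵥ c =
        β a (∑ i, c i • v i) ^ 2 - β a a * β (∑ i, c i • v i) (∑ i, c i • v i) := by
      simp only [dotProduct, mulVec, of_apply, map_sum, map_smul, LinearMap.sum_apply,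
        LinearMap.smul_apply, smul_eq_mul, Pi.star_apply, star_trivial, sq, Finset.sum_mul_sum]
      simp only [Finset.mul_sum, ← Finset.sum_sub_distrib]
      refine Finset.sum_congr rfl fun i _ => Finset.sum_congr rfl fun j _ => ?_
      rw [hβ.eq (v i) (v j)]
      ring
    rw [hquad, sub_nonneg]
    exact h _ (S.sum_mem fun i _ => S.smul_mem _ (hv i))

theorem neg_one_pow_mul_det_nonneg_of_reverse_cauchySchwarz (hβ : β.IsSymm) {r : ℕ}
    {v : Fin (r + 1) → E} (hpos : 0 < β (v 0) (v 0))
    (h : ∀ x ∈ S, β (v 0) (v 0) * β x x ≤ β (v 0) x ^ 2) (hv : ∀ i : Fin r, v i.succ ∈ S) :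
    0 ≤ (-1) ^ r * (of fun i j => β (v i) (v j)).det := by
  have hchio := neg_pow_mul_det_eq_mul_det_condensation (of fun i j => β (v i) (v j))
  simp only [of_apply, fun i : Fin r => hβ.eq (v i.succ) (v 0)] at hchio
  have hdet := mul_nonneg hpos.le (posSemidef_of_reverse_cauchySchwarz hβ h hv).det_nonneg
  rw [← hchio, neg_pow, mul_comm (_ ^ r), mul_assoc] at hdet
  exact nonneg_of_mul_nonneg_right hdet (pow_pos hpos r)

end ReverseCauchySchwarz

/-! ### Multilinear maps along a line -/

section LinePolynomial

variable {R ι : Type*} [CommSemiring R] [Fintype ι] [DecidableEq ι] {M : ι → Type*}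
  [∀ i, AddCommMonoid (M i)] [∀ i, Module R (M i)]

/-- The restriction of a multilinear form to the affine line `u + z • v`, as a polynomial in the
parameter `z`. -/
noncomputable def linePolynomial (f : MultilinearMap R M R) (u v : ∀ i, M i) : R[X] :=
  ∑ s : Finset ι, C (f (s.piecewise v u)) * X ^ s.card

variable (f : MultilinearMap R M R) (u v : ∀ i, M i)

theorem eval_linePolynomial (z : R) : (linePolynomial f u v).eval z = f (u + z • v) := by
  rw [add_comm, f.map_add_univ, linePolynomial, eval_finsetSum]
  refine Finset.sum_congr rfl fun s _ => ?_
  have hs : s.piecewise (z • v) u =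
      s.piecewise (fun i => z • s.piecewise v u i) (s.piecewise v u) := by
    ext i
    by_cases hi : i ∈ s <;> simp [hi]
  rw [hs, f.map_piecewise_smul, Finset.prod_const, eval_mul, eval_C, eval_X_pow, smul_eq_mul,
    mul_comm]

theorem coeff_linePolynomial (k : ℕ) :
    (linePolynomial f u v).coeff k =
      ∑ s ∈ Finset.powersetCard k Finset.univ, f (s.piecewise v u) := by
  simp only [linePolynomial, finsetSum_coeff, coeff_C_mul, coeff_X_pow, mul_ite, mul_one, mul_zero]
  rw [← Finset.sum_filter]
  refine Finset.sum_congr ?_ fun _ _ => rfl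
  ext s
  simp [Finset.mem_powersetCard, eq_comm]

theorem coeff_one_linePolynomial :
    (linePolynomial f u v).coeff 1 = ∑ i, f (Function.update u i (v i)) := by
  rw [coeff_linePolynomial, Finset.powersetCard_one, Finset.sum_map]
  simp [Finset.piecewise_singleton]

theorem coeff_card_linePolynomial : (linePolynomial f u v).coeff (Fintype.card ι) = f v := by
  rw [coeff_linePolynomial, ← Finset.card_univ, Finset.powersetCard_self, Finset.sum_singleton,
    Finset.piecewise_univ]

end LinePolynomial

/-! ### Hyperbolic forms -/

section FixLast

variable {R M N : Type*} [CommSemiring R] [AddCommMonoid M] [Module R M] [AddCommMonoid N]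
  [Module R N]

/-- The multilinear map `m ↦ f (m, b)` obtained by fixing the last argument of `f`. -/
def fixLast {n : ℕ} (f : MultilinearMap R (fun _ : Fin (n + 1) => M) N) (b : M) :
    MultilinearMap R (fun _ : Fin n => M) N :=
  (LinearMap.applyₗ b).compMultilinearMap f.curryRight

@[simp]
theorem fixLast_apply {n : ℕ} (f : MultilinearMap R (fun _ : Fin (n + 1) => M) N) (b : M)
    (m : Fin n → M) : fixLast f b m = f (Fin.snoc m b) :=
  rfl

end FixLast

section HyperbolicForm

variable {V : Type*} [AddCommGroup V] [Module ℂ V]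

/-- The real bilinear form `(x, y) ↦ Re f(x, y, B₃, …, Bₙ)`. -/
noncomputable def pairingForm {n : ℕ} (f : MultilinearMap ℂ (fun _ : Fin (n + 2) => V) ℂ)
    (B : Fin n → V) : LinearMap.BilinForm ℝ V :=
  LinearMap.mk₂ ℝ (fun x y => (f (Fin.cons x (Fin.cons y B))).re)
    (fun x x' y => by rw [f.cons_add, Complex.add_re])
    (fun c x y => by rw [← Complex.coe_smul, f.cons_smul]; simp)
    (fun x y y' => by
      simp only [← f.curryLeft_apply]
      rw [(f.curryLeft x).cons_add, Complex.add_re])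
    (fun c x y => by
      simp only [← f.curryLeft_apply]
      rw [← Complex.coe_smul, (f.curryLeft x).cons_smul]
      simp)

theorem pairingForm_apply {n : ℕ} (f : MultilinearMap ℂ (fun _ : Fin (n + 2) => V) ℂ)
    (B : Fin n → V) (x y : V) :
    pairingForm f B x y = (f (Fin.cons x (Fin.cons y B))).re :=
  rfl

variable [StarAddMonoid V] [StarModule ℂ V]

theorem imaginaryPart_add_smul_mem {K : ConvexCone ℝ V} {z b : V} (hz : (ℑ z : V) ∈ K)
    (hb : b ∈ K) (hbs : IsSelfAdjoint b) {w : ℂ} (hw : 0 ≤ w.im) : (ℑ (z + w • b) : V) ∈ K := by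
  have him : (ℑ (z + w • b) : V) = ℑ z + w.im • b := by
    simp [imaginaryPart_smul, hbs.imaginaryPart, hbs.coe_realPart]
  rw [him]
  obtain hw | hw := hw.eq_or_lt
  · simpa [← hw] using hz
  · exact K.add_mem hz (K.smul_mem hw hb)

theorem imaginaryPart_I_smul_mem {K : ConvexCone ℝ V} {b : V} (hb : b ∈ K) (hbs : IsSelfAdjoint b) :
    (ℑ (Complex.I • b) : V) ∈ K := by
  rwa [imaginaryPart_I_smul, hbs.coe_realPart]

/-- A symmetric multilinear form that is real on self-adjoint vectors and whose diagonal does not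
vanish on the tube `{z | ℑ z ∈ K}`. These are the polarizations of the homogeneous polynomials
that are hyperbolic with respect to the cone `K` of self-adjoint vectors. -/
structure IsHyperbolicForm (K : ConvexCone ℝ V) {n : ℕ}
    (f : MultilinearMap ℂ (fun _ : Fin n => V) ℂ) : Prop where
  isSelfAdjoint_of_mem : ∀ b ∈ K, IsSelfAdjoint b
  symm : ∀ (m : Fin n → V) (τ : Equiv.Perm (Fin n)), f (m ∘ τ) = f m
  isSelfAdjoint : ∀ m : Fin n → V, (∀ i, IsSelfAdjoint (m i)) → IsSelfAdjoint (f m)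
  diag_ne_zero : ∀ z : V, (ℑ z : V) ∈ K → f (fun _ => z) ≠ 0

namespace IsHyperbolicForm

variable {K : ConvexCone ℝ V} {n : ℕ}

theorem ofReal_re_apply {f : MultilinearMap ℂ (fun _ : Fin n => V) ℂ} (hf : IsHyperbolicForm K f)
    {m : Fin n → V} (hm : ∀ i, IsSelfAdjoint (m i)) : ((f m).re : ℂ) = f m :=
  Complex.conj_eq_iff_re.mp (hf.isSelfAdjoint m hm)

theorem apply_update_const {f : MultilinearMap ℂ (fun _ : Fin (n + 1) => V) ℂ}
    (hf : IsHyperbolicForm K f) (z b : V) (i : Fin (n + 1)) :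
    f (Function.update (fun _ => z) i b) = f (Fin.snoc (fun _ => z) b) := by
  rw [← hf.symm _ (Equiv.swap i (Fin.last n))]
  congr 1
  funext j
  refine Fin.lastCases ?_ (fun j => ?_) j
  · simp
  · rw [Fin.snoc_castSucc, Function.comp_apply, Function.update_of_ne]
    rw [Ne, Equiv.swap_apply_eq_iff, Equiv.swap_apply_left]
    exact (Fin.castSucc_lt_last j).ne

theorem pairingForm_isSymm {f : MultilinearMap ℂ (fun _ : Fin (n + 2) => V) ℂ}
    (hf : IsHyperbolicForm K f) (B : Fin n → V) : (pairingForm f B).IsSymm where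
  eq x y := by
    rw [pairingForm_apply, pairingForm_apply, ← hf.symm _ (Equiv.swap 0 1)]
    congr 2
    funext i
    refine Fin.cases ?_ (Fin.cases ?_ fun i => ?_) i
    · simp
    · rw [Fin.succ_zero_eq_one]
      simp
    · rw [Function.comp_apply, Equiv.swap_apply_of_ne_of_ne (by simp) (by simp [Fin.ext_iff])]
      rfl

theorem diag_ne_zero_of_mem {f : MultilinearMap ℂ (fun _ : Fin n => V) ℂ}
    (hf : IsHyperbolicForm K f) {b : V} (hb : b ∈ K) : f (fun _ => b) ≠ 0 := by
  intro h
  refine hf.diag_ne_zero _ (imaginaryPart_I_smul_mem hb (hf.isSelfAdjoint_of_mem b hb)) ?_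
  rw [f.map_smul_univ (fun _ => Complex.I) fun _ => b, h, smul_zero]

theorem fixLast {f : MultilinearMap ℂ (fun _ : Fin (n + 1) => V) ℂ} (hf : IsHyperbolicForm K f)
    {b : V} (hb : b ∈ K) : IsHyperbolicForm K (fixLast f b) where
  isSelfAdjoint_of_mem := hf.isSelfAdjoint_of_mem
  symm m τ := by
    rw [fixLast_apply, fixLast_apply, ← hf.symm (Fin.snoc m b)
      (τ.viaFintypeEmbedding Fin.castSuccEmb)]
    congr 1
    funext i
    refine Fin.lastCases ?_ (fun i => ?_) i
    · have hlast := τ.viaFintypeEmbedding_apply_notMem_range Fin.castSuccEmb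
        (b := Fin.last n) (by simp)
      simp [hlast]
    · have hcast := τ.viaFintypeEmbedding_apply_image Fin.castSuccEmb i
      simp only [Fin.coe_castSuccEmb] at hcast
      simp [hcast]
  isSelfAdjoint m hm :=
    hf.isSelfAdjoint _ (Fin.lastCases (by simpa using hf.isSelfAdjoint_of_mem b hb)
      fun i => by simpa using hm i)
  diag_ne_zero z hz := by
    set p := linePolynomial f (fun _ => z) fun _ => b with hp
    have hroot (w : ℂ) (hw : p.eval w = 0) : w.im < 0 := by
      by_contra! him
      rw [hp, eval_linePolynomial] at hw
      have hbs := hf.isSelfAdjoint_of_mem b hb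
      exact hf.diag_ne_zero _ (imaginaryPart_add_smul_mem hz hb hbs him) hw
    have hdeg : 0 < p.degree := by
      refine natDegree_pos_iff_degree_pos.mp (n.succ_pos.trans_le (le_natDegree_of_ne_zero ?_))
      have := coeff_card_linePolynomial f (fun _ => z) fun _ => b
      rw [Fintype.card_fin] at this
      exact this ▸ hf.diag_ne_zero_of_mem hb
    have hderiv := eval_derivative_ne_zero_of_forall_root_im_neg hdeg hroot (z := 0) le_rfl
    intro h
    rw [fixLast_apply] at h
    rw [← coeff_zero_eq_eval_zero, coeff_derivative, zero_add, hp, coeff_one_linePolynomial,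
      Finset.sum_eq_zero fun i _ => (hf.apply_update_const z b i).trans h, zero_mul] at hderiv
    exact hderiv rfl

theorem apply_ne_zero (hne : (K : Set V).Nonempty)
    {f : MultilinearMap ℂ (fun _ : Fin n => V) ℂ} (hf : IsHyperbolicForm K f) {B : Fin n → V}
    (hB : ∀ i, B i ∈ K) : f B ≠ 0 := by
  induction n with
  | zero =>
    obtain ⟨b, hb⟩ := hne
    rw [Subsingleton.elim B fun _ => b]
    exact hf.diag_ne_zero_of_mem hb
  | succ n ih =>
    rw [← Fin.snoc_init_self B]
    exact ih (hf.fixLast (hB _)) fun i => hB i.castSucc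

theorem apply_cons_cons_ne_zero {f : MultilinearMap ℂ (fun _ : Fin (n + 2) => V) ℂ}
    (hf : IsHyperbolicForm K f) {z : V} (hz : (ℑ z : V) ∈ K) {B : Fin n → V}
    (hB : ∀ i, B i ∈ K) : f (Fin.cons z (Fin.cons z B)) ≠ 0 := by
  induction n with
  | zero =>
    convert hf.diag_ne_zero z hz using 2
    funext i
    fin_cases i <;> rfl
  | succ n ih =>
    rw [← Fin.snoc_init_self B, Fin.cons_snoc_eq_snoc_cons, Fin.cons_snoc_eq_snoc_cons]
    exact ih (hf.fixLast (hB _)) fun i => hB i.castSucc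

theorem mul_le_sq_pairingForm {f : MultilinearMap ℂ (fun _ : Fin (n + 2) => V) ℂ}
    (hf : IsHyperbolicForm K f) {a x : V} (ha : a ∈ K) (hx : IsSelfAdjoint x) {B : Fin n → V}
    (hB : ∀ i, B i ∈ K) :
    pairingForm f B a a * pairingForm f B x x ≤ pairingForm f B a x ^ 2 := by
  have has := hf.isSelfAdjoint_of_mem a ha
  refine mul_le_sq_of_forall_im_pos_ne_zero fun z hz => ?_
  have him : (ℑ (x + z • a) : V) ∈ K := by
    simpa [imaginaryPart_smul, hx.imaginaryPart, has.imaginaryPart, has.coe_realPart] using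
      K.smul_mem hz ha
  refine ne_of_eq_of_ne ?_ (hf.apply_cons_cons_ne_zero him hB)
  have hreal {u v : V} (hu : IsSelfAdjoint u) (hv : IsSelfAdjoint v) :
      (pairingForm f B u v : ℂ) = f (Fin.cons u (Fin.cons v B)) :=
    hf.ofReal_re_apply (Fin.cases hu (Fin.cases hv fun i => hf.isSelfAdjoint_of_mem _ (hB i)))
  rw [f.cons_add, f.cons_smul]
  simp only [← f.curryLeft_apply, MultilinearMap.cons_add, MultilinearMap.cons_smul]
  simp only [f.curryLeft_apply, ← hreal hx hx, ← hreal hx has, ← hreal has hx, ← hreal has has,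
    smul_eq_mul, (hf.pairingForm_isSymm B).eq x a]
  ring

theorem re_apply_pos [TopologicalSpace V] [ContinuousAdd V] [ContinuousSMul ℝ V]
    {f : MultilinearMap ℂ (fun _ : Fin n => V) ℂ} (hf : IsHyperbolicForm K f)
    (hfc : Continuous f) {e : V} (he : e ∈ K) (hpos : 0 < (f fun _ => e).re) {B : Fin n → V}
    (hB : ∀ i, B i ∈ K) : 0 < (f B).re := by
  let s : Set (Fin n → V) := Set.univ.pi fun _ => K
  have hs : IsPreconnected s := (convex_pi fun _ _ => K.convex).isPreconnected
  have hne (m : Fin n → V) (hm : m ∈ s) : (f m).re ≠ 0 := fun h => by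
    have hm' (i : Fin n) : m i ∈ K := hm i trivial
    refine hf.apply_ne_zero ⟨e, he⟩ hm' ?_
    rw [← hf.ofReal_re_apply fun i => hf.isSelfAdjoint_of_mem _ (hm' i), h, Complex.ofReal_zero]
  by_contra! hneg
  obtain ⟨m, hm, hm0⟩ := hs.intermediate_value (fun i _ => hB i) (fun _ _ => he)
    (Complex.continuous_re.comp hfc).continuousOn ⟨hneg, hpos.le⟩
  exact hne m hm hm0

end IsHyperbolicForm
end HyperbolicForm

/-! ### Mixed discriminants -/

section MixedDiscriminant

variable {n : ℕ}

/-- The mixed discriminant as a multilinear form. -/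
noncomputable def mixedDiscMultilinear (n : ℕ) :
    MultilinearMap ℂ (fun _ : Fin n => Matrix (Fin n) (Fin n) ℂ) ℂ :=
  (n.factorial : ℂ)⁻¹ • ∑ σ : Equiv.Perm (Fin n),
    ((detRowAlternating (n := Fin n) (R := ℂ)).toMultilinearMap.compLinearMap fun j =>
      (LinearMap.proj j).comp (transposeLinearEquiv (Fin n) (Fin n) ℂ ℂ).toLinearMap).domDomCongr σ

theorem mixedDiscMultilinear_apply (A : Fin n → Matrix (Fin n) (Fin n) ℂ) :
    mixedDiscMultilinear n A = mixedDisc A := by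
  simp only [mixedDiscMultilinear, mixedDisc, _root_.smul_apply, _root_.sum_apply, smul_eq_mul]
  refine congrArg _ (Finset.sum_congr rfl fun σ _ => ?_)
  rw [← det_transpose]
  rfl

theorem mixedDisc_comp_perm (A : Fin n → Matrix (Fin n) (Fin n) ℂ) (τ : Equiv.Perm (Fin n)) :
    mixedDisc (A ∘ τ) = mixedDisc A := by
  unfold mixedDisc
  exact congrArg _ (Fintype.sum_equiv (Equiv.mulLeft τ) _ _ fun σ => rfl)

theorem mixedDisc_const (A : Matrix (Fin n) (Fin n) ℂ) : mixedDisc (fun _ => A) = A.det := by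
  have hn : (n.factorial : ℂ) ≠ 0 := Nat.cast_ne_zero.mpr n.factorial_ne_zero
  have hA : (of fun i j => A i j) = A := rfl
  simp [mixedDisc, hA, Fintype.card_perm, hn]

theorem continuous_mixedDisc (n : ℕ) :
    Continuous (mixedDisc : (Fin n → Matrix (Fin n) (Fin n) ℂ) → ℂ) := by
  unfold mixedDisc
  refine continuous_const.mul (continuous_finsetSum _ fun σ _ => Continuous.matrix_det ?_)
  refine continuous_matrix fun i j => ?_
  simp only [of_apply]
  exact (continuous_apply (σ j)).matrix_elem i j

theorem isSelfAdjoint_mixedDisc {A : Fin n → Matrix (Fin n) (Fin n) ℂ}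
    (hA : ∀ i, (A i).IsHermitian) : IsSelfAdjoint (mixedDisc A) := by
  have hstar (σ : Equiv.Perm (Fin n)) : star (of fun i j => A (σ j) i j).det =
      ∑ τ : Equiv.Perm (Fin n), (Equiv.Perm.sign τ : ℂ) * ∏ i, A (σ (τ i)) (τ i) i := by
    rw [← det_conjTranspose, det_apply']
    refine Finset.sum_congr rfl fun τ _ => congrArg _ (Finset.prod_congr rfl fun i _ => ?_)
    exact (hA _).apply _ _
  rw [isSelfAdjoint_iff, mixedDisc, star_mul', star_sum, Finset.sum_congr rfl fun σ _ => hstar σ,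
    star_inv₀, star_natCast, Finset.sum_comm]
  simp only [det_apply', of_apply]
  conv_rhs => rw [Finset.sum_comm]
  refine congrArg _ (Finset.sum_congr rfl fun τ _ => ?_)
  exact Fintype.sum_equiv (Equiv.mulRight τ) _ _ fun σ => rfl

/-- The cone of positive definite complex matrices. -/
def posDefCone (m : Type*) : ConvexCone ℝ (Matrix m m ℂ) where
  carrier := {M | M.PosDef}
  smul_mem' _ hc _ hM := hM.smul hc
  add_mem' _ hM _ hN := hM.add hN

@[simp]
theorem mem_posDefCone {m : Type*} {M : Matrix m m ℂ} : M ∈ posDefCone m ↔ M.PosDef :=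
  Iff.rfl

theorem det_ne_zero_of_posDef_imaginaryPart {m : Type*} [Fintype m] [DecidableEq m]
    {Z : Matrix m m ℂ} (hZ : (ℑ Z : Matrix m m ℂ).PosDef) : Z.det ≠ 0 := by
  intro h
  obtain ⟨v, hv, hZv⟩ := exists_mulVec_eq_zero_iff.mpr h
  have hre : (star v ⬝ᵥ (ℜ Z : Matrix m m ℂ) *ᵥ v).im = 0 :=
    IsHermitian.im_star_dotProduct_mulVec_self (ℜ Z).2 v
  have him : 0 < (star v ⬝ᵥ (ℑ Z : Matrix m m ℂ) *ᵥ v).re :=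
    (Complex.pos_iff.mp (hZ.dotProduct_mulVec_pos hv)).1
  have hsum : (star v ⬝ᵥ Z *ᵥ v).im =
      (star v ⬝ᵥ (ℜ Z : Matrix m m ℂ) *ᵥ v).im + (star v ⬝ᵥ (ℑ Z : Matrix m m ℂ) *ᵥ v).re := by
    conv_lhs => rw [← realPart_add_I_smul_imaginaryPart Z, add_mulVec, smul_mulVec,
      dotProduct_add, dotProduct_smul, smul_eq_mul, Complex.add_im, Complex.I_mul_im]
  rw [hZv, dotProduct_zero, Complex.zero_im, hre, zero_add] at hsum
  exact him.ne hsum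

theorem isHyperbolicForm_mixedDiscMultilinear (n : ℕ) :
    IsHyperbolicForm (posDefCone (Fin n)) (mixedDiscMultilinear n) where
  isSelfAdjoint_of_mem _ hM := hM.isHermitian
  symm m τ := by simp only [mixedDiscMultilinear_apply, mixedDisc_comp_perm]
  isSelfAdjoint m hm := by
    rw [mixedDiscMultilinear_apply]
    exact isSelfAdjoint_mixedDisc hm
  diag_ne_zero Z hZ := by
    rw [mixedDiscMultilinear_apply, mixedDisc_const]
    exact det_ne_zero_of_posDef_imaginaryPart hZ

theorem re_mixedDisc_pos {B : Fin n → Matrix (Fin n) (Fin n) ℂ} (hB : ∀ i, (B i).PosDef) :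
    0 < (mixedDisc B).re := by
  have hcont : Continuous (mixedDiscMultilinear n) := by
    simpa only [funext mixedDiscMultilinear_apply] using continuous_mixedDisc n
  rw [← mixedDiscMultilinear_apply]
  refine (isHyperbolicForm_mixedDiscMultilinear n).re_apply_pos hcont
    (mem_posDefCone.mpr PosDef.one) ?_ hB
  simp [mixedDiscMultilinear_apply, mixedDisc_const]

/-- The real bilinear form `(X, Y) ↦ D(X, Y, B₃, …, Bₙ)`. Taking real parts only matters for
matrices that are not Hermitian. -/
noncomputable abbrev mixedDiscForm (B : Fin n → Matrix (Fin (n + 2)) (Fin (n + 2)) ℂ) :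
    LinearMap.BilinForm ℝ (Matrix (Fin (n + 2)) (Fin (n + 2)) ℂ) :=
  pairingForm (mixedDiscMultilinear (n + 2)) B

theorem mixedDiscForm_apply (B : Fin n → Matrix (Fin (n + 2)) (Fin (n + 2)) ℂ)
    (X Y : Matrix (Fin (n + 2)) (Fin (n + 2)) ℂ) :
    mixedDiscForm B X Y = (mixedDisc (Fin.cons X (Fin.cons Y B))).re := by
  rw [pairingForm_apply, mixedDiscMultilinear_apply]

theorem mixedDiscForm_pos {X Y : Matrix (Fin (n + 2)) (Fin (n + 2)) ℂ}
    {B : Fin n → Matrix (Fin (n + 2)) (Fin (n + 2)) ℂ} (hX : X.PosDef) (hY : Y.PosDef)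
    (hB : ∀ i, (B i).PosDef) : 0 < mixedDiscForm B X Y := by
  rw [mixedDiscForm_apply]
  exact re_mixedDisc_pos (Fin.cases hX (Fin.cases hY hB))

@[fun_prop]
theorem continuous_mixedDiscForm {T : Type*} [TopologicalSpace T]
    {B : T → Fin n → Matrix (Fin (n + 2)) (Fin (n + 2)) ℂ}
    {X Y : T → Matrix (Fin (n + 2)) (Fin (n + 2)) ℂ} (hB : Continuous B) (hX : Continuous X)
    (hY : Continuous Y) : Continuous fun t => mixedDiscForm (B t) (X t) (Y t) := by
  simp only [mixedDiscForm_apply]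
  exact Complex.continuous_re.comp
    ((continuous_mixedDisc (n + 2)).comp (hX.finCons (hY.finCons hB)))

theorem nonneg_of_forall_posDef {ι m : Type*} [Finite m]
    {f : Matrix m m ℂ → (ι → Matrix m m ℂ) → ℝ} (hf : Continuous fun p : _ × _ => f p.1 p.2)
    (hpos : ∀ A B, A.PosDef → (∀ i, (B i).PosDef) → 0 ≤ f A B) {A : Matrix m m ℂ}
    {B : ι → Matrix m m ℂ} (hA : A.PosSemidef) (hB : ∀ i, (B i).PosSemidef) : 0 ≤ f A B := by
  classical
  have hcont : Continuous fun ε : ℝ => f (A + ε • 1) fun i => B i + ε • 1 :=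
    hf.comp (f := fun ε : ℝ => (A + ε • 1, fun i => B i + ε • 1)) (by fun_prop)
  have hlim : Tendsto (fun ε : ℝ => f (A + ε • 1) fun i => B i + ε • 1) (𝓝[>] 0) (𝓝 (f A B)) := by
    simpa using (hcont.tendsto 0).mono_left nhdsWithin_le_nhds
  have hposDef {M : Matrix m m ℂ} (hM : M.PosSemidef) {ε : ℝ} (hε : 0 < ε) :
      (M + ε • 1).PosDef :=
    PosDef.posSemidef_add hM (PosDef.one.smul hε)
  exact ge_of_tendsto hlim (eventually_of_mem self_mem_nhdsWithin fun ε hε =>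
    hpos _ _ (hposDef hA hε) fun i => hposDef (hB i) hε)

theorem mixedDiscForm_alexandrov_fenchel {A X : Matrix (Fin (n + 2)) (Fin (n + 2)) ℂ}
    {B : Fin n → Matrix (Fin (n + 2)) (Fin (n + 2)) ℂ} (hA : A.PosSemidef) (hX : X.IsHermitian)
    (hB : ∀ i, (B i).PosSemidef) :
    mixedDiscForm B A A * mixedDiscForm B X X ≤ mixedDiscForm B A X ^ 2 := by
  refine sub_nonneg.mp (nonneg_of_forall_posDef
    (f := fun A B => mixedDiscForm B A X ^ 2 - mixedDiscForm B A A * mixedDiscForm B X X)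
    (by fun_prop) (fun A B hA hB => sub_nonneg.mpr ?_) hA hB)
  exact (isHyperbolicForm_mixedDiscMultilinear _).mul_le_sq_pairingForm hA hX hB

end MixedDiscriminant

theorem af_mixedDisc_determinantal_general (n r : ℕ)
    (A : Fin (r + 1) → Matrix (Fin (n + 2)) (Fin (n + 2)) ℂ)
    (B : Fin n → Matrix (Fin (n + 2)) (Fin (n + 2)) ℂ)
    (hA₀ : (A 0).PosSemidef) (hA : ∀ i : Fin r, (A i.succ).IsHermitian)
    (hB : ∀ i, (B i).PosSemidef) :
    (Matrix.of fun i j : Fin r =>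
        (mixedDisc (Fin.cons (A 0) (Fin.cons (A i.succ) B))).re *
            (mixedDisc (Fin.cons (A 0) (Fin.cons (A j.succ) B))).re -
          (mixedDisc (Fin.cons (A 0) (Fin.cons (A 0) B))).re *
            (mixedDisc (Fin.cons (A i.succ) (Fin.cons (A j.succ) B))).re).PosSemidef ∧
      0 ≤ (-1 : ℝ) ^ r * (Matrix.of fun i j : Fin (r + 1) =>
        (mixedDisc (Fin.cons (A i) (Fin.cons (A j) B))).re).det := by
  let S := selfAdjoint.submodule ℝ (Matrix (Fin (n + 2)) (Fin (n + 2)) ℂ)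
  have hsymm (B : Fin n → Matrix (Fin (n + 2)) (Fin (n + 2)) ℂ) : (mixedDiscForm B).IsSymm :=
    (isHyperbolicForm_mixedDiscMultilinear _).pairingForm_isSymm B
  simp only [← mixedDiscForm_apply]
  refine ⟨posSemidef_of_reverse_cauchySchwarz (S := S) (hsymm B)
    (fun X hX => mixedDiscForm_alexandrov_fenchel hA₀ hX hB) hA, ?_⟩
  let v := fun A₀ => (Fin.cons A₀ (Fin.tail A) : Fin (r + 1) → Matrix _ _ ℂ)
  have hv : Continuous v := continuous_pi (Fin.cases continuous_id fun _ => continuous_const)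
  have hdet := nonneg_of_forall_posDef
    (f := fun A₀ B => (-1) ^ r * (of fun i j => mixedDiscForm B (v A₀ i) (v A₀ j)).det)
    (by fun_prop) (fun A₀ B hA₀ hB => ?_) hA₀ hB
  · simpa only [v, Fin.cons_self_tail] using hdet
  · exact neg_one_pow_mul_det_nonneg_of_reverse_cauchySchwarz (S := S) (hsymm B)
      (mixedDiscForm_pos hA₀ hA₀ hB)
      (fun X hX => mixedDiscForm_alexandrov_fenchel hA₀.posSemidef hX
        fun i => (hB i).posSemidef) hA

/-- determinantal generalization of the Alexandrov–Fenchel inequality for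
mixed discriminants: with `dᵢⱼ = D(Aᵢ, Aⱼ, B₃, …, Bₙ)` of positive semidefinite Hermitian
matrices, `det((d₀ᵢd₀ⱼ − d₀₀dᵢⱼ)₁≤i,j≤r) ≥ 0` and `(−1)^r det((dᵢⱼ)₀≤i,j≤r) ≥ 0`. -/
theorem af_mixedDisc_determinantal (n r : ℕ) (hr : 1 ≤ r)
    (A : Fin (r + 1) → Matrix (Fin (n + 2)) (Fin (n + 2)) ℂ)
    (B : Fin n → Matrix (Fin (n + 2)) (Fin (n + 2)) ℂ)
    (hA : ∀ i, (A i).PosSemidef) (hB : ∀ i, (B i).PosSemidef) :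
    0 ≤ (Matrix.of fun i j : Fin r =>
        (mixedDisc (Fin.cons (A 0) (Fin.cons (A i.succ) B))).re *
            (mixedDisc (Fin.cons (A 0) (Fin.cons (A j.succ) B))).re -
          (mixedDisc (Fin.cons (A 0) (Fin.cons (A 0) B))).re *
            (mixedDisc (Fin.cons (A i.succ) (Fin.cons (A j.succ) B))).re).det ∧
      0 ≤ (-1 : ℝ) ^ r * (Matrix.of fun i j : Fin (r + 1) =>
        (mixedDisc (Fin.cons (A i) (Fin.cons (A j) B))).re).det :=
  (af_mixedDisc_determinantal_general n r A B (hA 0) (fun i => (hA i.succ).isHermitian) hB).imp_left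
    PosSemidef.det_nonneg
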